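/- Stepping-up lemma: M(n+1, q+2) ≥ M(n,q)! and F(n+1, q+2) ≥ M(n,q), where S(n,q) is the set of words w over an alphabet of size q that avoid Z_n and have a distinguished letter d such that every infix of w not containing d avoids Z_{n-1}; M(n,q) = |S(n,q)| and F(n,q) is the maximum length of a word in S(n,q). -/

import Mathlib

/-- Zimin words over the alphabet `ℕ`. -/
def Zimin : ℕ → List ℕ
  | 0 => []
  | n + 1 => Zimin n ++ [n + 1] ++ Zimin n

/-- `X` is a copy of `Z_n`: it is obtained by substituting a nonempty word for
each letter of the Zimin word `Z_n`. -/
def IsZiminCopy {α : Type*} (n : ℕ) (X : List α) : Prop :=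
  ∃ σ : ℕ → List α, (∀ i, σ i ≠ []) ∧ X = (Zimin n).flatMap σ

/-- `w` contains a copy of `Z_n` as a contiguous subword (infix). -/
def ContainsZimin {α : Type*} (n : ℕ) (w : List α) : Prop :=
  ∃ X : List α, IsZiminCopy n X ∧ X <:+: w

/-- `S(n,q)`: words `w` over `Fin q` avoiding `Z_n` which have a distinguished
letter `d` such that every infix of `w` not containing `d` avoids `Z_{n-1}`. -/
def ZiminS (n q : ℕ) : Set (List (Fin q)) :=
  {w | ¬ ContainsZimin n w ∧ ∃ d : Fin q,
    ∀ v : List (Fin q), v <:+: w → d ∉ v → ¬ ContainsZimin (n - 1) v}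

/-- `M(n,q) = |S(n,q)|`. -/
noncomputable def ZiminM (n q : ℕ) : ℕ := (ZiminS n q).ncard

/-- `F(n,q)`: the largest length of a word in `S(n,q)`. -/
noncomputable def ZiminF (n q : ℕ) : ℕ :=
  sSup {L | ∃ w ∈ ZiminS n q, w.length = L}

theorem zimin_mem_le (n : ℕ) : ∀ k ∈ Zimin n, k ≤ n := by
  induction n with
  | zero => intro k hk; simp [Zimin] at hk
  | succ n ih =>
    intro k hk
    simp only [Zimin, List.mem_append, List.mem_singleton] at hk
    rcases hk with (hk | hk) | hk
    · exact (ih k hk).trans (Nat.le_succ n)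
    · omega
    · exact (ih k hk).trans (Nat.le_succ n)

theorem copy_succ {α : Type*} (n : ℕ) (X : List α) :
    IsZiminCopy (n + 1) X ↔ ∃ A z, z ≠ [] ∧ IsZiminCopy n A ∧ X = A ++ z ++ A := by
  constructor
  · rintro ⟨σ, h1, h2⟩
    refine ⟨(Zimin n).flatMap σ, σ (n + 1), h1 _, ⟨σ, h1, rfl⟩, ?_⟩
    rw [h2]; simp [Zimin]
  · rintro ⟨A, z, hz, ⟨σ, h1, h2⟩, rfl⟩
    refine ⟨Function.update σ (n + 1) z, ?_, ?_⟩
    · intro i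
      by_cases hi : i = n + 1
      · subst hi; simpa using hz
      · simpa [Function.update_of_ne hi] using h1 i
    · have : (Zimin n).flatMap (Function.update σ (n + 1) z) = (Zimin n).flatMap σ := by
        apply List.flatMap_congr
        intro k hk
        have := zimin_mem_le n k hk
        rw [Function.update_of_ne (by omega)]
      simp [Zimin, this, h2]

theorem copy_ne_nil {α : Type*} {n : ℕ} (hn : 1 ≤ n) {X : List α} (h : IsZiminCopy n X) :
    X ≠ [] := by
  obtain ⟨m, rfl⟩ : ∃ m, n = m + 1 := ⟨n - 1, by omega⟩
  obtain ⟨A, z, hz, -, rfl⟩ := (copy_succ _ _).1 h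
  simp [hz]

theorem copy_of_map {α β : Type*} {f : α → β} (hf : Function.Injective f) (n : ℕ) :
    ∀ v : List α, IsZiminCopy n (v.map f) → (∃ a : α, True) → IsZiminCopy n v := by
  induction n with
  | zero =>
    rintro v ⟨σ, h1, h2⟩ ⟨a, -⟩
    refine ⟨fun _ => [a], by simp, ?_⟩
    simpa [Zimin] using h2
  | succ n ih =>
    intro v h ha
    obtain ⟨A, z, hz, hA, hX⟩ := (copy_succ _ _).1 h
    rw [List.map_eq_append_iff] at hX
    obtain ⟨v1, v2, rfl, h1, h2⟩ := hX
    rw [List.map_eq_append_iff] at h1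
    obtain ⟨v3, v4, rfl, h3, h4⟩ := h1
    have : v3 = v2 := hf.list_map (h3.trans h2.symm)
    subst this
    refine (copy_succ _ _).2 ⟨v3, v4, ?_, ih _ (by rw [h3]; exact hA) ha, rfl⟩
    rintro rfl; simp at h4; exact hz h4

theorem infix_map_elim {α β : Type*} {f : α → β} {X : List β} {w : List α}
    (h : X <:+: w.map f) : ∃ v, v <:+: w ∧ X = v.map f := by
  obtain ⟨s, t, h⟩ := h
  rw [eq_comm, List.map_eq_append_iff] at h
  obtain ⟨v1, v2, rfl, h1, h2⟩ := h
  rw [List.map_eq_append_iff] at h1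
  obtain ⟨v3, v4, rfl, h3, h4⟩ := h1
  exact ⟨v4, ⟨v3, v2, rfl⟩, h4.symm⟩

/-- A copy of `Z_n` in the image of `w` comes from a copy in `w`. -/
theorem copy_infix_map {α β : Type*} {f : α → β} (hf : Function.Injective f) {n : ℕ}
    (hn : 1 ≤ n) {X : List β} {w : List α}
    (h : X <:+: w.map f) (hX : IsZiminCopy n X) :
    ∃ v, v <:+: w ∧ X = v.map f ∧ IsZiminCopy n v := by
  obtain ⟨v, hv, rfl⟩ := infix_map_elim h
  refine ⟨v, hv, rfl, copy_of_map hf n v hX ?_⟩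
  have := copy_ne_nil hn hX
  cases v with
  | nil => simp at this
  | cons a _ => exact ⟨a, trivial⟩

theorem infix_cons_fresh {α : Type*} {a : α} {w X : List α} {n : ℕ} (hn : 2 ≤ n)
    (ha : a ∉ w) (hX : IsZiminCopy n X) (h : X <:+: a :: w) : X <:+: w := by
  rcases List.infix_cons_iff.1 h with h | h
  · exfalso
    obtain ⟨m, rfl⟩ : ∃ m, n = m + 1 := ⟨n - 1, by omega⟩
    obtain ⟨A, z, hz, hA, rfl⟩ := (copy_succ _ _).1 hX
    have hne := copy_ne_nil (by omega) hA
    cases A with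
    | nil => exact hne rfl
    | cons b A =>
      simp only [List.cons_append, List.append_assoc, List.cons_prefix_cons] at h
      obtain ⟨rfl, hh⟩ := h
      exact ha (hh.subset (a := b) (by simp))
  · exact h

/-! ### Unavoidability -/

theorem unavoidable (q n : ℕ) :
    ∃ N, ∀ w : List (Fin q), N ≤ w.length → ContainsZimin n w := by
  induction n with
  | zero =>
    refine ⟨1, fun w hw => ?_⟩
    cases w with
    | nil => simp at hw
    | cons a w => exact ⟨[], ⟨fun _ => [a], by simp, by simp [Zimin]⟩, by simp⟩
  | succ n ih =>
    obtain ⟨N, hN⟩ := ih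
    refine ⟨(N + 1) * (q ^ N + 1), fun w hw => ?_⟩
    have hlen : ∀ i : Fin (q ^ N + 1), (N + 1) * i.1 + (N + 1) ≤ w.length := by
      intro i
      have : (N + 1) * (i.1 + 1) ≤ (N + 1) * (q ^ N + 1) := Nat.mul_le_mul_left _ i.2
      rw [Nat.mul_add, Nat.mul_one] at this
      omega
    let g : Fin (q ^ N + 1) → List.Vector (Fin q) N := fun i =>
      ⟨(w.drop ((N + 1) * i.1)).take N, by
        have := hlen i
        simp only [List.length_take, List.length_drop]; omega⟩
    obtain ⟨i0, j0, hne0, hij0⟩ := Fintype.exists_ne_map_eq_of_card_lt g (by simp)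
    obtain ⟨i, j, hlt, hij⟩ : ∃ i j, i < j ∧ g i = g j := by
      rcases lt_or_gt_of_ne hne0 with h | h
      · exact ⟨_, _, h, hij0⟩
      · exact ⟨_, _, h, hij0.symm⟩
    have hb : (w.drop ((N + 1) * i.1)).take N = (w.drop ((N + 1) * j.1)).take N :=
      congrArg Subtype.val hij
    obtain ⟨b, hbdef⟩ : ∃ b, b = (w.drop ((N + 1) * i.1)).take N := ⟨_, rfl⟩
    have hbl : b.length = N := by rw [hbdef]; exact (g i).2
    obtain ⟨A, hA, p, s, hps⟩ := hN b hbl.ge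
    have hj := hlen j
    have hmul : (N + 1) * i.1 + (N + 1) ≤ (N + 1) * j.1 := by
      have : (N + 1) * (i.1 + 1) ≤ (N + 1) * j.1 := Nat.mul_le_mul_left _ hlt
      rwa [Nat.mul_add, Nat.mul_one] at this
    obtain ⟨k, hk⟩ : ∃ k, (N + 1) * j.1 = (N + 1) * i.1 + N + (k + 1) :=
      ⟨(N + 1) * j.1 - ((N + 1) * i.1 + N) - 1, by omega⟩
    have e1 : w = w.take ((N + 1) * i.1) ++ (b ++ w.drop ((N + 1) * i.1 + N)) := by
      conv_lhs => rw [← List.take_append_drop ((N + 1) * i.1) w,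
        ← List.take_append_drop N (w.drop ((N + 1) * i.1)), ← hbdef, List.drop_drop]
    have e2 : w.drop ((N + 1) * i.1 + N) = (w.drop ((N + 1) * i.1 + N)).take (k + 1) ++
        (b ++ w.drop ((N + 1) * j.1 + N)) := by
      conv_lhs => rw [← List.take_append_drop (k + 1) (w.drop ((N + 1) * i.1 + N)),
        List.drop_drop, ← hk, ← List.take_append_drop N (w.drop ((N + 1) * j.1)),
        ← hb, ← hbdef, List.drop_drop]
    obtain ⟨m, hm⟩ : ∃ m, m = (w.drop ((N + 1) * i.1 + N)).take (k + 1) := ⟨_, rfl⟩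
    have hml : m ≠ [] := by
      intro h0
      have : m.length = k + 1 := by
        rw [hm]; simp only [List.length_take, List.length_drop]; omega
      simp [h0] at this
    rw [← hm] at e2
    refine ⟨A ++ (s ++ m ++ p) ++ A, (copy_succ _ _).2 ⟨A, _, by simp [hml], hA, rfl⟩,
      w.take ((N + 1) * i.1) ++ p, s ++ w.drop ((N + 1) * j.1 + N), ?_⟩
    conv_rhs => rw [e1, e2, ← hps]
    simp

theorem ZiminS_bdd (n q : ℕ) : ∃ N, ∀ w ∈ ZiminS n q, w.length < N := by
  obtain ⟨N, hN⟩ := unavoidable q n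
  refine ⟨N, fun w hw => ?_⟩
  by_contra h
  exact hw.1 (hN w (by omega))

theorem ZiminS_finite (n q : ℕ) : (ZiminS n q).Finite := by
  obtain ⟨N, hN⟩ := ZiminS_bdd n q
  exact (List.finite_length_lt (Fin q) N).subset hN

/-! ### Concatenations of blocks -/

/-- Concatenate blocks, each followed by the separator `d`. -/
def flat {α : Type*} (d : α) (L : List (List α)) : List α := L.flatMap (fun b => b ++ [d])

theorem flat_cons {α : Type*} (d : α) (b : List α) (L : List (List α)) :
    flat d (b :: L) = b ++ d :: flat d L := by simp [flat]

theorem flat_length {α : Type*} (d : α) (L : List (List α)) :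
    L.length ≤ (flat d L).length := by
  induction L with
  | nil => simp
  | cons b L ih => rw [flat_cons]; simp; omega

theorem sep_unique {α : Type*} {d : α} {b b' R R' : List α} (hb : d ∉ b) (hb' : d ∉ b')
    (h : b ++ d :: R = b' ++ d :: R') : b = b' ∧ R = R' := by
  induction b generalizing b' with
  | nil =>
    cases b' with
    | nil => simpa using h
    | cons x b' => simp at h hb'; exact absurd h.1 hb'.1
  | cons y b ih =>
    cases b' with
    | nil => simp at h hb; exact absurd h.1.symm hb.1
    | cons x b' =>
      simp at h hb hb'
      obtain ⟨rfl, h⟩ := h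
      obtain ⟨rfl, hh⟩ := ih hb.2 hb'.2 h
      exact ⟨rfl, hh⟩

theorem flat_inj {α : Type*} {d : α} : ∀ {L L' : List (List α)},
    (∀ b ∈ L, d ∉ b) → (∀ b ∈ L', d ∉ b) → flat d L = flat d L' → L = L' := by
  intro L
  induction L with
  | nil =>
    intro L' _ _ h
    cases L' with
    | nil => rfl
    | cons b L' => rw [flat_cons] at h; simp [flat] at h
  | cons b L ih =>
    intro L' h1 h2 h
    cases L' with
    | nil => rw [flat_cons] at h; simp [flat] at h
    | cons b' L' =>
      rw [flat_cons, flat_cons] at h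
      obtain ⟨rfl, hh⟩ := sep_unique (h1 b (by simp)) (h2 b' (by simp)) h
      rw [ih (fun b hb => h1 b (by simp [hb])) (fun b hb => h2 b (by simp [hb])) hh]

section
variable {α : Type*} [DecidableEq α]

theorem flat_infix {d : α} : ∀ {L : List (List α)} {P A R : List α},
    (∀ b ∈ L, d ∉ b) → flat d L = P ++ (A ++ R) → d ∉ A → A ≠ [] →
    ∃ b, L[P.count d]? = some b ∧ A <:+: b := by
  intro L
  induction L with
  | nil => intro P A R _ h _ hA; simp [flat] at h; exact absurd h.2.1 hA
  | cons b L ih =>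
    intro P A R hL h hd hA
    have hb : d ∉ b := hL b (by simp)
    rw [flat_cons, List.append_eq_append_iff] at h
    rcases h with ⟨a, rfl, h⟩ | ⟨c, rfl, h⟩
    · cases a with
      | nil =>
        exfalso
        cases A with
        | nil => exact hA rfl
        | cons x A => simp at h hd; exact hd.1 h.1
      | cons x a =>
        simp only [List.cons_append, List.cons.injEq] at h
        obtain ⟨rfl, h⟩ := h
        obtain ⟨b', h1, h2⟩ := ih (fun b hb => hL b (by simp [hb])) h hd hA
        refine ⟨b', ?_, h2⟩
        simpa [List.count_append, List.count_eq_zero.2 hb] using h1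
    · have hP : d ∉ P := fun h => hb (by simp [h])
      refine ⟨P ++ c, by simp [List.count_eq_zero.2 hP], ?_⟩
      rw [List.append_eq_append_iff] at h
      rcases h with ⟨a, rfl, h⟩ | ⟨a, rfl, h⟩
      · exact ⟨P, a, by simp⟩
      · cases a with
        | nil => exact ⟨P, [], by simp⟩
        | cons x a => simp at h hd; exact absurd h.1 hd.2.1

theorem flat_drop {d : α} : ∀ {L : List (List α)} {P R : List α},
    (∀ b ∈ L, d ∉ b) → flat d L = P ++ d :: R → flat d (L.drop (P.count d + 1)) = R := by
  intro L
  induction L with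
  | nil => intro P R _ h; simp [flat] at h
  | cons b L ih =>
    intro P R hL h
    have hb : d ∉ b := hL b (by simp)
    rw [flat_cons] at h
    by_cases hP : d ∈ P
    · obtain ⟨u, v, rfl, hu⟩ := List.eq_append_cons_of_mem hP
      rw [List.append_assoc, List.cons_append] at h
      obtain ⟨rfl, hh⟩ := sep_unique hb hu h
      have := ih (fun b hb => hL b (by simp [hb])) hh
      simpa [List.count_append, List.count_eq_zero.2 hu] using this
    · obtain ⟨rfl, hh⟩ := sep_unique hb hP h
      simpa [List.count_eq_zero.2 hP] using hh

theorem flat_block {d : α} {L : List (List α)} {P b R : List α}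
    (hL : ∀ b ∈ L, d ∉ b) (h : flat d L = P ++ d :: (b ++ d :: R)) (hb : d ∉ b) :
    L[P.count d + 1]? = some b := by
  have h1 := flat_drop hL h
  cases hD : L.drop (P.count d + 1) with
  | nil => rw [hD] at h1; simp [flat] at h1
  | cons b' L' =>
    rw [hD, flat_cons] at h1
    have hb' : d ∉ b' := hL b' (List.mem_of_mem_drop (i := P.count d + 1) (by rw [hD]; simp))
    obtain ⟨rfl, -⟩ := sep_unique hb' hb h1
    have := congrArg (fun l => l[0]?) hD
    simpa using this

theorem flat_avoids {d : α} {n : ℕ} (hn : 2 ≤ n) {L : List (List α)}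
    (hL : ∀ b ∈ L, d ∉ b) (hav : ∀ b ∈ L, ¬ ContainsZimin n b) (hnd : L.Nodup)
    (H : ∀ i j b1 b2 b3 b4 A, i < j → L[i]? = some b1 → L[i + 1]? = some b2 →
      L[j]? = some b3 → L[j + 1]? = some b4 → IsZiminCopy (n - 1) A →
      A <:+: b1 → A <:+: b2 → A <:+: b3 → A <:+: b4 → False) :
    ¬ ContainsZimin (n + 1) (flat d L) := by
  rintro ⟨T, hT, P, Q, hW⟩
  obtain ⟨X, Y, hY, hX, rfl⟩ := (copy_succ _ _).1 hT
  have hXne := copy_ne_nil (by omega) hX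
  have hW1 : flat d L = P ++ (X ++ (Y ++ X ++ Q)) := by rw [← hW]; simp
  have hW2 : flat d L = (P ++ X ++ Y) ++ (X ++ Q) := by rw [← hW]; simp
  by_cases h0 : d ∈ X
  swap
  · obtain ⟨b, hb, hXb⟩ := flat_infix hL hW1 h0 hXne
    exact hav b (List.mem_of_getElem? hb) ⟨X, hX, hXb⟩
  obtain ⟨m, rfl⟩ : ∃ m, n = m + 1 := ⟨n - 1, by omega⟩
  by_cases h1 : X.count d = 1
  · obtain ⟨A, z, hz, hA, rfl⟩ := (copy_succ _ _).1 hX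
    have hAne := copy_ne_nil (by omega) hA
    simp only [List.count_append] at h1
    have hA0 : A.count d = 0 := by omega
    have hz1 : z.count d = 1 := by omega
    have hdA : d ∉ A := List.count_eq_zero.1 hA0
    obtain ⟨b1, hb1, hi1⟩ := flat_infix (P := P) (A := A)
      (R := z ++ A ++ Y ++ A ++ z ++ A ++ Q) hL (by rw [hW1]; simp) hdA hAne
    obtain ⟨b2, hb2, hi2⟩ := flat_infix (P := P ++ A ++ z) (A := A)
      (R := Y ++ A ++ z ++ A ++ Q) hL (by rw [hW1]; simp) hdA hAne
    obtain ⟨b3, hb3, hi3⟩ := flat_infix (P := P ++ A ++ z ++ A ++ Y) (A := A)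
      (R := z ++ A ++ Q) hL (by rw [hW1]; simp) hdA hAne
    obtain ⟨b4, hb4, hi4⟩ := flat_infix (P := P ++ A ++ z ++ A ++ Y ++ A ++ z) (A := A)
      (R := Q) hL (by rw [hW1]; simp) hdA hAne
    refine H (P.count d) (P.count d + 1 + Y.count d) b1 b2 b3 b4 A (by omega) hb1 ?_ ?_ ?_
      hA hi1 hi2 hi3 hi4
    · rw [← hb2]; congr 1; simp only [List.count_append]; omega
    · rw [← hb3]; congr 1; simp only [List.count_append]; omega
    · rw [← hb4]; congr 1; simp only [List.count_append]; omega
  · obtain ⟨u, v, rfl, hu⟩ := List.eq_append_cons_of_mem h0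
    have hv : d ∈ v := by
      by_contra hv
      apply h1
      simp [List.count_append, List.count_eq_zero.2 hu, List.count_eq_zero.2 hv]
    obtain ⟨b, v', rfl, hb⟩ := List.eq_append_cons_of_mem hv
    have e1 := flat_block (P := P ++ u) (b := b)
      (R := v' ++ Y ++ (u ++ d :: (b ++ d :: v')) ++ Q) hL (by rw [hW1]; simp) hb
    have e2 := flat_block (P := P ++ (u ++ d :: (b ++ d :: v')) ++ Y ++ u) (b := b)
      (R := v' ++ Q) hL (by rw [hW1]; simp) hb
    obtain ⟨l1, -⟩ := List.getElem?_eq_some_iff.1 e1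
    have := (List.getElem?_inj l1 hnd).1 (e1.trans e2.symm)
    simp [List.count_append] at this

theorem flat_sub_avoids {d : α} {n : ℕ} (hn : 1 ≤ n) {L : List (List α)}
    (hL : ∀ b ∈ L, d ∉ b) (hav : ∀ b ∈ L, ¬ ContainsZimin n b)
    (v : List α) (hv : v <:+: flat d L) (hd : d ∉ v) : ¬ ContainsZimin n v := by
  rintro ⟨X, hX, hXv⟩
  obtain ⟨P, Q, h⟩ := hXv.trans hv
  obtain ⟨b, hb, hXb⟩ := flat_infix (P := P) (A := X) (R := Q) hL (by rw [← h]; simp)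
    (fun h => hd (hXv.subset h)) (copy_ne_nil hn hX)
  exact hav b (List.mem_of_getElem? hb) ⟨X, hX, hXb⟩

end

/-- The general stepping-up step from a block encoding `B`. -/
theorem step_of_encoding (n q : ℕ) (hn : 2 ≤ n)
    (B : ℕ → List (Fin q) → List (Fin (q + 2)))
    (hd : ∀ i, ∀ w ∈ ZiminS n q, Fin.last (q + 1) ∉ B i w)
    (hav : ∀ i, ∀ w ∈ ZiminS n q, ¬ ContainsZimin n (B i w))
    (hinj : ∀ i j, ∀ w ∈ ZiminS n q, ∀ w' ∈ ZiminS n q, B i w = B j w' → w = w')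
    (H : ∀ i j w1 w2 w3 A, i < j → w1 ∈ ZiminS n q → w2 ∈ ZiminS n q → w3 ∈ ZiminS n q →
      w1 ≠ w2 → w1 ≠ w3 → w2 ≠ w3 → IsZiminCopy (n - 1) A →
      A <:+: B i w1 → A <:+: B (i + 1) w2 → A <:+: B (j + 1) w3 → False) :
    (ZiminM n q).factorial ≤ ZiminM (n + 1) (q + 2) ∧
    ZiminM n q ≤ ZiminF (n + 1) (q + 2) := by
  have hfin := ZiminS_finite n q
  have hfin' := ZiminS_finite (n + 1) (q + 2)
  have : Finite (ZiminS n q) := hfin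
  have : Finite (ZiminS (n + 1) (q + 2)) := hfin'
  let e : ZiminS n q ≃ Fin (ZiminM n q) := Finite.equivFin (ZiminS n q)
  let s : Equiv.Perm (Fin (ZiminM n q)) → Fin (ZiminM n q) → List (Fin q) :=
    fun σ i => (e.symm (σ i)).1
  have hs : ∀ σ i, s σ i ∈ ZiminS n q := fun σ i => (e.symm (σ i)).2
  have hsi : ∀ σ, Function.Injective (s σ) := fun σ i j h =>
    σ.injective (e.symm.injective (Subtype.ext h))
  let L : Equiv.Perm (Fin (ZiminM n q)) → List (List (Fin (q + 2))) :=
    fun σ => List.ofFn (fun i => B i.1 (s σ i))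
  have hget : ∀ σ i b, (L σ)[i]? = some b → ∃ h : i < ZiminM n q, b = B i (s σ ⟨i, h⟩) := by
    intro σ i b h
    obtain ⟨h1, h2⟩ := List.getElem?_eq_some_iff.1 h
    refine ⟨by simpa [L] using h1, ?_⟩
    rw [← h2]; simp [L]
  have hLd : ∀ σ, ∀ b ∈ L σ, Fin.last (q + 1) ∉ b := by
    intro σ b hb
    obtain ⟨i, rfl⟩ := (List.mem_ofFn' _ _).1 hb
    exact hd _ _ (hs σ i)
  have hLav : ∀ σ, ∀ b ∈ L σ, ¬ ContainsZimin n b := by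
    intro σ b hb
    obtain ⟨i, rfl⟩ := (List.mem_ofFn' _ _).1 hb
    exact hav _ _ (hs σ i)
  have hLnd : ∀ σ, (L σ).Nodup := by
    intro σ
    apply List.nodup_ofFn.2
    intro i j h
    exact hsi σ (hinj _ _ _ (hs σ i) _ (hs σ j) h)
  have hmem : ∀ σ, flat (Fin.last (q + 1)) (L σ) ∈ ZiminS (n + 1) (q + 2) := by
    intro σ
    refine ⟨flat_avoids hn (hLd σ) (hLav σ) (hLnd σ) ?_, Fin.last (q + 1), ?_⟩
    · intro i j b1 b2 b3 b4 A hij h1 h2 h3 h4 hA i1 i2 i3 i4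
      obtain ⟨l1, rfl⟩ := hget _ _ _ h1
      obtain ⟨l2, rfl⟩ := hget _ _ _ h2
      obtain ⟨l4, rfl⟩ := hget _ _ _ h4
      refine H i j _ _ _ A hij (hs σ _) (hs σ _) (hs σ _) ?_ ?_ ?_ hA i1 i2 i4
      all_goals
        intro h
        have := congrArg Fin.val (hsi σ h)
        simp at this
        try omega
    · intro v hv hdv
      exact flat_sub_avoids (by omega) (hLd σ) (hLav σ) v hv hdv
  constructor
  · let Φ : Equiv.Perm (Fin (ZiminM n q)) → ZiminS (n + 1) (q + 2) := fun σ => ⟨_, hmem σ⟩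
    have hΦ : Function.Injective Φ := by
      intro σ τ h
      have h1 := flat_inj (hLd σ) (hLd τ) (congrArg Subtype.val h)
      have h2 := List.ofFn_injective h1
      ext i
      have h3 := hinj _ _ _ (hs σ i) _ (hs τ i) (congrFun h2 i)
      rw [e.symm.injective (Subtype.ext h3)]
    have := Nat.card_le_card_of_injective Φ hΦ
    rw [Nat.card_perm, Nat.card_fin] at this
    exact this
  · have hlen : ZiminM n q ≤ (flat (Fin.last (q + 1)) (L 1)).length := by
      refine le_trans ?_ (flat_length _ _)
      simp [L]
    refine hlen.trans (le_csSup ?_ ⟨_, hmem 1, rfl⟩)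
    obtain ⟨N, hN⟩ := ZiminS_bdd (n + 1) (q + 2)
    refine ⟨N, ?_⟩
    rintro _ ⟨w, hw, rfl⟩
    exact (hN w hw).le

/-- The embedding of the old letters. -/
def emb (q : ℕ) (x : Fin q) : Fin (q + 2) := x.castSucc.castSucc

theorem emb_inj (q : ℕ) : Function.Injective (emb q) := fun x y h => by
  simpa [emb] using h

theorem emb_ne_last (q : ℕ) (x : Fin q) : emb q x ≠ Fin.last (q + 1) := by
  intro h; have := congrArg Fin.val h; simp [emb] at this; omega

/-- The new distinguished letter. -/
def newE (q : ℕ) : Fin (q + 2) := (Fin.last q).castSucc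

theorem emb_ne_e (q : ℕ) (x : Fin q) : emb q x ≠ newE q := by
  intro h; have := congrArg Fin.val h; simp [emb, newE] at this; omega

theorem e_ne_last (q : ℕ) : newE q ≠ Fin.last (q + 1) := by
  intro h; have := congrArg Fin.val h; simp [newE] at this

theorem map_avoids {α β : Type*} {f : α → β} (hf : Function.Injective f) {n : ℕ}
    (hn : 1 ≤ n) {w : List α} (h : ¬ ContainsZimin n w) : ¬ ContainsZimin n (w.map f) := by
  rintro ⟨X, hX, hi⟩
  obtain ⟨v, hv, -, hc⟩ := copy_infix_map hf hn hi hX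
  exact h ⟨v, hc, hv⟩

theorem S_two {q : ℕ} {w : List (Fin q)} (hw : w ∈ ZiminS 2 q) {a : Fin q} (ha : a ∈ w) :
    w = [a] ∨ w = [a, a] := by
  obtain ⟨h1, d, h2⟩ := hw
  have hall : ∀ x ∈ w, x = d := by
    intro x hx
    by_contra hne
    obtain ⟨s, t, rfl⟩ := List.append_of_mem hx
    refine h2 [x] ⟨s, t, by simp⟩ (by simpa using fun h => hne h.symm)
      ⟨[x], ⟨fun _ => [x], by simp, by simp [Zimin]⟩, List.infix_rfl⟩
  have had := hall a ha
  subst had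
  have hr : w = List.replicate w.length a := List.eq_replicate_iff.2 ⟨rfl, hall⟩
  obtain ⟨k, hk⟩ : ∃ k, k = w.length := ⟨_, rfl⟩
  rw [← hk] at hr
  subst hr
  match k with
  | 0 => simp at ha
  | 1 => left; rfl
  | 2 => right; rfl
  | k + 3 =>
    exfalso
    exact h1 ⟨[a, a, a], ⟨fun _ => [a], by simp, by simp [Zimin]⟩,
      [], List.replicate k a, by simp [List.replicate_succ]⟩

theorem step_two (q : ℕ) :
    (ZiminM 2 q).factorial ≤ ZiminM 3 (q + 2) ∧ ZiminM 2 q ≤ ZiminF 3 (q + 2) := by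
  refine step_of_encoding 2 q le_rfl (fun _ w => w.map (emb q)) ?_ ?_ ?_ ?_
  · intro i w _ h
    obtain ⟨x, -, hx⟩ := List.mem_map.1 h
    exact emb_ne_last q x hx
  · intro i w hw
    exact map_avoids (emb_inj q) (by norm_num) hw.1
  · intro i j w _ w' _ h
    exact (emb_inj q).list_map h
  · intro i j w1 w2 w3 A _ h1 h2 h3 n12 n13 n23 hA i1 i2 i3
    have hne := copy_ne_nil (by norm_num) hA
    obtain ⟨x, hx⟩ := List.exists_mem_of_ne_nil A hne
    obtain ⟨a, ha, rfl⟩ := List.mem_map.1 (i1.subset hx)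
    have ha2 : a ∈ w2 := (List.mem_map_of_injective (emb_inj q)).1 (i2.subset hx)
    have ha3 : a ∈ w3 := (List.mem_map_of_injective (emb_inj q)).1 (i3.subset hx)
    rcases S_two h1 ha with r1 | r1 <;> rcases S_two h2 ha2 with r2 | r2 <;>
      rcases S_two h3 ha3 with r3 | r3 <;> simp_all

/-- Replace the letter `c` by the new letter. -/
def substE (q : ℕ) (c : Fin q) : Fin q → Fin (q + 2) := Function.update (emb q) c (newE q)

theorem subst_self (q : ℕ) (c : Fin q) : substE q c c = newE q := by simp [substE]

theorem subst_ne (q : ℕ) {c x : Fin q} (h : x ≠ c) : substE q c x = emb q x := by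
  simp [substE, Function.update_of_ne h]

theorem subst_inj (q : ℕ) (c : Fin q) : Function.Injective (substE q c) := by
  intro x y h
  by_cases hx : x = c <;> by_cases hy : y = c
  · rw [hx, hy]
  · rw [hx, subst_self, subst_ne q hy] at h; exact absurd h.symm (emb_ne_e q y)
  · rw [hy, subst_self, subst_ne q hx] at h; exact absurd h (emb_ne_e q x)
  · rw [subst_ne q hx, subst_ne q hy] at h; exact emb_inj q h

theorem emb_not_mem_sub (q : ℕ) (c : Fin q) (w : List (Fin q)) : emb q c ∉ w.map (substE q c) := by
  intro h
  obtain ⟨x, -, hx⟩ := List.mem_map.1 h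
  by_cases hc : x = c
  · rw [hc, subst_self] at hx; exact emb_ne_e q c hx.symm
  · rw [subst_ne q hc] at hx; exact hc (emb_inj q hx)

open Classical in
/-- The encoding used for odd-indexed blocks. -/
noncomputable def phi (n q : ℕ) (w : List (Fin q)) : List (Fin (q + 2)) :=
  if h : ContainsZimin (n - 1) w ∧ ∃ d : Fin q,
    ∀ v : List (Fin q), v <:+: w → d ∉ v → ¬ ContainsZimin (n - 1) v
  then emb q h.2.choose :: w.map (substE q h.2.choose) else w.map (emb q)

theorem phi_cases {n q : ℕ} {w : List (Fin q)} (hw : w ∈ ZiminS n q) :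
    (¬ ContainsZimin (n - 1) w ∧ phi n q w = w.map (emb q)) ∨
    (∃ c : Fin q, c ∈ w ∧
      (∀ v : List (Fin q), v <:+: w → c ∉ v → ¬ ContainsZimin (n - 1) v) ∧
      phi n q w = emb q c :: w.map (substE q c)) := by
  by_cases h : ContainsZimin (n - 1) w
  · right
    have h' : ContainsZimin (n - 1) w ∧ ∃ d : Fin q,
      ∀ v : List (Fin q), v <:+: w → d ∉ v → ¬ ContainsZimin (n - 1) v := ⟨h, hw.2⟩
    refine ⟨h'.2.choose, ?_, h'.2.choose_spec, by rw [phi, dif_pos h']⟩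
    by_contra hc
    exact h'.2.choose_spec w List.infix_rfl hc h
  · left
    exact ⟨h, by rw [phi, dif_neg (fun h' => h h'.1)]⟩

theorem e_not_mem_emb (q : ℕ) (w : List (Fin q)) : newE q ∉ w.map (emb q) := by
  intro h
  obtain ⟨x, -, hx⟩ := List.mem_map.1 h
  exact emb_ne_e q x hx

theorem last_not_mem_emb (q : ℕ) (w : List (Fin q)) : Fin.last (q + 1) ∉ w.map (emb q) := by
  intro h
  obtain ⟨x, -, hx⟩ := List.mem_map.1 h
  exact emb_ne_last q x hx

theorem phi_last {n q : ℕ} {w : List (Fin q)} (hw : w ∈ ZiminS n q) :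
    Fin.last (q + 1) ∉ phi n q w := by
  rcases phi_cases hw with ⟨-, h⟩ | ⟨c, -, -, h⟩ <;> rw [h]
  · exact last_not_mem_emb q w
  · intro hm
    rcases List.mem_cons.1 hm with hm | hm
    · exact emb_ne_last q c hm.symm
    · obtain ⟨x, -, hx⟩ := List.mem_map.1 hm
      by_cases hc : x = c
      · rw [hc, subst_self] at hx; exact e_ne_last q hx
      · rw [subst_ne q hc] at hx; exact emb_ne_last q x hx

theorem phi_avoids {n q : ℕ} (hn : 2 ≤ n) {w : List (Fin q)} (hw : w ∈ ZiminS n q) :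
    ¬ ContainsZimin n (phi n q w) := by
  rcases phi_cases hw with ⟨-, h⟩ | ⟨c, -, -, h⟩ <;> rw [h]
  · exact map_avoids (emb_inj q) (by omega) hw.1
  · rintro ⟨X, hX, hi⟩
    exact map_avoids (subst_inj q c) (by omega) hw.1
      ⟨X, hX, infix_cons_fresh hn (emb_not_mem_sub q c w) hX hi⟩

theorem phi_infix {n q : ℕ} (hn : 3 ≤ n) {w : List (Fin q)} (hw : w ∈ ZiminS n q)
    {A : List (Fin (q + 2))} (hA : IsZiminCopy (n - 1) A) (hi : A <:+: phi n q w) :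
    newE q ∈ A := by
  by_contra he
  rcases phi_cases hw with ⟨h1, h⟩ | ⟨c, -, h1, h⟩ <;> rw [h] at hi
  · exact map_avoids (emb_inj q) (by omega) h1 ⟨A, hA, hi⟩
  · have hi' := infix_cons_fresh (by omega) (emb_not_mem_sub q c w) hA hi
    obtain ⟨v, hv, rfl, hc⟩ := copy_infix_map (subst_inj q c) (by omega) hi' hA
    refine h1 v hv (fun hcv => he ?_) ⟨v, hc, List.infix_rfl⟩
    rw [← subst_self q c]
    exact List.mem_map_of_mem hcv

theorem phi_emb {n q : ℕ} {w w' : List (Fin q)} (hw : w ∈ ZiminS n q)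
    (h : phi n q w = w'.map (emb q)) : w = w' := by
  rcases phi_cases hw with ⟨-, h'⟩ | ⟨c, hc, -, h'⟩ <;> rw [h'] at h
  · exact (emb_inj q).list_map h
  · exfalso
    apply e_not_mem_emb q w'
    rw [← h, ← subst_self q c]
    exact List.mem_cons_of_mem _ (List.mem_map_of_mem hc)

theorem phi_inj {n q : ℕ} {w w' : List (Fin q)} (hw : w ∈ ZiminS n q)
    (hw' : w' ∈ ZiminS n q) (h : phi n q w = phi n q w') : w = w' := by
  rcases phi_cases hw' with ⟨-, h'⟩ | ⟨c', hc', -, h'⟩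
  · exact phi_emb hw (h.trans h')
  · rcases phi_cases hw with ⟨-, h2⟩ | ⟨c, hc, -, h2⟩
    · exact (phi_emb hw' (h.symm.trans h2)).symm
    · rw [h', h2, List.cons.injEq] at h
      obtain ⟨h3, h4⟩ := h
      have := emb_inj q h3
      subst this
      exact (subst_inj q c).list_map h4

theorem step_ge_three (n q : ℕ) (hn : 3 ≤ n) :
    (ZiminM n q).factorial ≤ ZiminM (n + 1) (q + 2) ∧
    ZiminM n q ≤ ZiminF (n + 1) (q + 2) := by
  refine step_of_encoding n q (by omega)
    (fun i w => if i % 2 = 0 then w.map (emb q) else phi n q w) ?_ ?_ ?_ ?_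
  · intro i w hw
    split_ifs
    · exact last_not_mem_emb q w
    · exact phi_last hw
  · intro i w hw
    split_ifs
    · exact map_avoids (emb_inj q) (by omega) hw.1
    · exact phi_avoids (by omega) hw
  · intro i j w hw w' hw' h
    split_ifs at h
    · exact (emb_inj q).list_map h
    · exact (phi_emb hw' h.symm).symm
    · exact phi_emb hw h
    · exact phi_inj hw hw' h
  · intro i j w1 w2 w3 A _ h1 h2 h3 n12 n13 n23 hA i1 i2 i3
    by_cases hi : i % 2 = 0
    · rw [if_pos hi] at i1
      rw [if_neg (by omega)] at i2
      exact e_not_mem_emb q w1 (i1.subset (phi_infix hn h2 hA i2))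
    · rw [if_neg hi] at i1
      rw [if_pos (by omega)] at i2
      exact e_not_mem_emb q w2 (i2.subset (phi_infix hn h1 hA i1))

theorem S_one (q : ℕ) : ZiminS 1 q = ∅ := by
  ext w
  simp only [Set.mem_empty_iff_false, iff_false]
  rintro ⟨-, d, h⟩
  exact h [] (List.nil_infix) (by simp)
    ⟨[], ⟨fun _ => [d], by simp, by simp [Zimin]⟩, List.infix_rfl⟩

theorem step_one (q : ℕ) :
    (ZiminM 1 q).factorial ≤ ZiminM 2 (q + 2) ∧ ZiminM 1 q ≤ ZiminF 2 (q + 2) := by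
  have h0 : ZiminM 1 q = 0 := by simp [ZiminM, S_one]
  rw [h0]
  refine ⟨?_, Nat.zero_le _⟩
  have hmem : ([] : List (Fin (q + 2))) ∈ ZiminS 2 (q + 2) := by
    have hne : ∀ n, 1 ≤ n → ¬ ContainsZimin n ([] : List (Fin (q + 2))) := by
      rintro n hn ⟨X, hX, hi⟩
      exact copy_ne_nil hn hX (List.infix_nil.1 hi)
    refine ⟨hne 2 (by norm_num), 0, ?_⟩
    intro v hv _
    rw [List.infix_nil.1 hv]
    exact hne _ (by norm_num)
  exact (Set.ncard_pos (ZiminS_finite 2 (q + 2))).2 ⟨_, hmem⟩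

/-- Stepping-up lemma: `M(n+1, q+2) ≥ M(n,q)!` and `F(n+1, q+2) ≥ M(n,q)`. -/
theorem stepping_up (n q : ℕ) (hn : 1 ≤ n) :
    (ZiminM n q).factorial ≤ ZiminM (n + 1) (q + 2) ∧
    ZiminM n q ≤ ZiminF (n + 1) (q + 2) := by
  rcases Nat.lt_or_ge n 3 with h | h
  · interval_cases n
    · exact step_one q
    · exact step_two q
  · exact step_ge_three n q h
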